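/- Let I ⊂ ℝ be an open interval, ω : I → ℝ of class C¹, and u : ℝ → ℂ a C¹ function compactly supported in I. Then for every ℏ > 0: ‖u‖_{L^∞(ℝ)}² ≤ 2·ℏ^{−1}·‖u‖_{L²(ℝ)}·‖(ℏD_x − ω′(x))u‖_{L²(ℝ)}, where D_x = −i d/dx. (Consequently, if ‖u‖_{L²} ≤ A and ‖(ℏD_x − ω′)u‖_{L²} ≤ B, then ‖u‖_{L^∞} ≤ √2·ℏ^{−1/2}·(AB)^{1/2}: an L^∞ bound with the gain characteristic of Lagrangian distributions along the graph of ω′.) -/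

import Mathlib

open MeasureTheory

/-!
The gauge factor `e^{-iω/ℏ}` need not be introduced: its effect is that the multiplication operator
`iω′/ℏ` is skew-symmetric, so `Re ⟪u, u′⟫ = Re ⟪u, v⟫` with `v = (i/ℏ)(ℏD_x - ω′)u`, and hence
`(|u|²)′ = 2 Re ⟪u, v⟫`. Integrating this from both `-∞` and `+∞` to `x` and averaging gives
`|u x|² ≤ ∫ |u| |v|`, and Cauchy–Schwarz concludes. A single half-line would lose a factor `2`.
-/

open Set
open scoped ENNReal RealInnerProductSpace

section HalfLines

variable {F : Type*} [NormedAddCommGroup F] [NormedSpace ℝ F] [CompleteSpace F]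

theorem two_mul_enorm_le_lintegral_enorm_deriv {f : ℝ → F} (hf : Differentiable ℝ f)
    (hfi : Integrable f) (x : ℝ) : 2 * ‖f x‖ₑ ≤ ∫⁻ y, ‖deriv f y‖ₑ := by
  rcases eq_or_ne (∫⁻ y, ‖deriv f y‖ₑ) ∞ with htop | hfin
  · exact htop ▸ le_top
  have hderiv (y : ℝ) : HasDerivAt f (deriv f y) y := (hf y).hasDerivAt
  have hdi : Integrable (deriv f) := ⟨aestronglyMeasurable_deriv f _, hfin.lt_top⟩
  have left : ∫ y in Iic x, deriv f y = f x := by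
    simpa only [sub_zero] using integral_Iic_of_hasDerivAt_of_tendsto' (fun y _ ↦ hderiv y)
      hdi.integrableOn (tendsto_zero_of_hasDerivAt_of_integrableOn_Iic (a := x)
        (fun y _ ↦ hderiv y) hdi.integrableOn hfi.integrableOn)
  have right : ∫ y in Ioi x, deriv f y = -f x := by
    simpa only [zero_sub] using integral_Ioi_of_hasDerivAt_of_tendsto' (fun y _ ↦ hderiv y)
      hdi.integrableOn (tendsto_zero_of_hasDerivAt_of_integrableOn_Ioi (a := x)
        (fun y _ ↦ hderiv y) hdi.integrableOn hfi.integrableOn)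
  calc 2 * ‖f x‖ₑ
      = ‖∫ y in Iic x, deriv f y‖ₑ + ‖∫ y in Ioi x, deriv f y‖ₑ := by
        rw [left, right, enorm_neg, two_mul]
    _ ≤ (∫⁻ y in Iic x, ‖deriv f y‖ₑ) + ∫⁻ y in Ioi x, ‖deriv f y‖ₑ :=
        add_le_add (enorm_integral_le_lintegral_enorm _) (enorm_integral_le_lintegral_enorm _)
    _ = ∫⁻ y, ‖deriv f y‖ₑ := by
        rw [← compl_Iic, lintegral_add_compl _ measurableSet_Iic]

theorem two_mul_eLpNorm_top_le_eLpNorm_one_deriv {f : ℝ → F} (hf : Differentiable ℝ f)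
    (hfi : Integrable f) : 2 * eLpNorm f ∞ volume ≤ eLpNorm (deriv f) 1 volume := by
  rw [eLpNorm_exponent_top, eLpNorm_one_eq_lintegral_enorm, eLpNormEssSup,
    ← ENNReal.essSup_const_mul]
  exact essSup_le_of_ae_le _ (.of_forall (two_mul_enorm_le_lintegral_enorm_deriv hf hfi))

end HalfLines

section LpNorms

variable {α 𝕜 E : Type*} [MeasurableSpace α] {μ : Measure α} [RCLike 𝕜] [NormedAddCommGroup E]

theorem eLpNorm_norm_sq (u : α → E) (p : ℝ≥0∞) :
    eLpNorm (fun x ↦ ‖u x‖ ^ 2) p μ = eLpNorm u (p * 2) μ ^ 2 := by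
  simpa using eLpNorm_norm_rpow (p := p) (μ := μ) u (q := 2) two_pos

theorem eLpNorm_inner_le [InnerProductSpace 𝕜 E] {u v : α → E} {p q r : ℝ≥0∞}
    [ENNReal.HolderTriple p q r] (hu : AEStronglyMeasurable u μ)
    (hv : AEStronglyMeasurable v μ) :
    eLpNorm (fun x ↦ inner 𝕜 (u x) (v x)) r μ ≤ eLpNorm u p μ * eLpNorm v q μ := by
  simpa only [ENNReal.coe_one, one_mul] using
    eLpNorm_le_eLpNorm_mul_eLpNorm'_of_norm hu hv (inner 𝕜) 1
      (.of_forall fun x ↦ by simpa using norm_inner_le_norm (𝕜 := 𝕜) (u x) (v x))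

end LpNorms

theorem eLpNorm_top_sq_le_of_inner_eq_inner_deriv {E : Type*} [NormedAddCommGroup E]
    [InnerProductSpace ℝ E] {u v : ℝ → E} (hu : Differentiable ℝ u) (hu2 : MemLp u 2)
    (hv : AEStronglyMeasurable v) (huv : ∀ x, ⟪u x, v x⟫ = ⟪u x, deriv u x⟫) :
    eLpNorm u ∞ volume ^ 2 ≤ eLpNorm u 2 volume * eLpNorm v 2 volume := by
  have hderiv : deriv (fun x ↦ ‖u x‖ ^ 2) = (2 : ℝ) • fun x ↦ ⟪u x, v x⟫ := by
    ext x
    simpa [huv] using (hu x).hasDerivAt.norm_sq.deriv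
  have hsq := two_mul_eLpNorm_top_le_eLpNorm_one_deriv (hu.norm_sq ℝ)
    (hu2.integrable_norm_pow two_ne_zero)
  have htwo : ‖(2 : ℝ)‖ₑ = 2 := by simp [enorm_eq_nnnorm]
  rw [eLpNorm_norm_sq, ENNReal.top_mul two_ne_zero, hderiv, eLpNorm_const_smul, htwo] at hsq
  exact ((ENNReal.mul_le_mul_iff_right two_ne_zero ENNReal.ofNat_ne_top).1 hsq).trans
    (eLpNorm_inner_le hu2.1 hv)

section Gauge

variable {E : Type*} [NormedAddCommGroup E] [InnerProductSpace ℂ E]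

theorem re_inner_I_div_smul_momentum {ℏ : ℝ} (hℏ : ℏ ≠ 0) (t : ℝ) (w z : E) :
    (inner ℂ w ((Complex.I / ℏ) • ((ℏ : ℂ) • (-Complex.I • z) - (t : ℂ) • w))).re =
      (inner ℂ w z).re := by
  have hgauge : (Complex.I / ℏ) • ((ℏ : ℂ) • (-Complex.I • z) - (t : ℂ) • w) =
      z - ((t / ℏ : ℝ) * Complex.I) • w := by
    have hunit : Complex.I / ℏ * ℏ * -Complex.I = 1 := by
      rw [div_mul_cancel₀ _ (Complex.ofReal_ne_zero.2 hℏ), mul_neg, Complex.I_mul_I, neg_neg]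
    have hpotential : Complex.I / ℏ * t = (t / ℏ : ℝ) * Complex.I := by
      push_cast
      ring
    rw [smul_sub, smul_smul, smul_smul, smul_smul, hunit, one_smul, hpotential]
  -- `⟪w, isw⟫ = is‖w‖²` is purely imaginary for real `s`.
  have hskew : (inner ℂ w (((t / ℏ : ℝ) * Complex.I) • w)).re = 0 := by
    rw [inner_smul_right, inner_self_eq_norm_sq_to_K]
    simp [← Complex.ofReal_pow, -Complex.ofReal_div]
  rw [hgauge, inner_sub_right, Complex.sub_re, hskew, sub_zero]

theorem stmt_19_general [CompleteSpace E] {u : ℝ → E} (hu : Differentiable ℝ u)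
    (hu2 : MemLp u 2) {a : ℝ → ℝ} (ha : AEMeasurable a) {ℏ : ℝ} (hℏ : 0 < ℏ) :
    eLpNorm u ∞ volume ^ 2 ≤
      ENNReal.ofReal (1 / ℏ) * eLpNorm u 2 volume *
        eLpNorm (fun x ↦ (ℏ : ℂ) • (-Complex.I • deriv u x) - (a x : ℂ) • u x) 2 volume := by
  let : InnerProductSpace ℝ E := InnerProductSpace.complexToReal
  set P : ℝ → E := fun x ↦ (ℏ : ℂ) • (-Complex.I • deriv u x) - (a x : ℂ) • u x
  have hP : AEStronglyMeasurable P :=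
    (((aestronglyMeasurable_deriv u _).const_smul _).const_smul _).sub
      ((Complex.measurable_ofReal.comp_aemeasurable ha).aestronglyMeasurable.smul hu2.1)
  have hnorm : ‖Complex.I / ℏ‖ₑ = ENNReal.ofReal (1 / ℏ) := by
    rw [← ofReal_norm, norm_div, Complex.norm_I, Complex.norm_of_nonneg hℏ.le]
  calc
    eLpNorm u ∞ volume ^ 2
      ≤ eLpNorm u 2 volume * eLpNorm ((Complex.I / ℏ) • P) 2 volume :=
        eLpNorm_top_sq_le_of_inner_eq_inner_deriv hu hu2 (hP.const_smul _) fun x ↦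
          re_inner_I_div_smul_momentum hℏ.ne' (a x) (u x) (deriv u x)
    _ = ENNReal.ofReal (1 / ℏ) * eLpNorm u 2 volume * eLpNorm P 2 volume := by
        rw [eLpNorm_const_smul, hnorm, mul_left_comm, mul_assoc]

end Gauge

/-- the semiclassical Gagliardo–Nirenberg/interpolation inequality
`‖u‖_∞² ≤ 2 ℏ⁻¹ ‖u‖₂ ‖(ℏD_x − ω′(x))u‖₂` for `u` of class `C¹` compactly supported in an
open interval `I` on which `ω` is `C¹`.  Here `D_x = −i d/dx`. -/
theorem stmt_19 (I : Set ℝ) (hIopen : IsOpen I) (hIconn : I.OrdConnected)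
    (ω : ℝ → ℝ) (hω : ContDiffOn ℝ 1 ω I)
    (u : ℝ → ℂ) (hu : ContDiff ℝ 1 u)
    (husupp : HasCompactSupport u) (husub : tsupport u ⊆ I)
    (ℏ : ℝ) (hℏ : 0 < ℏ) :
    (eLpNorm u ⊤ volume) ^ 2 ≤
      ENNReal.ofReal (2 / ℏ) * eLpNorm u 2 volume *
        eLpNorm (fun x => (ℏ : ℂ) * (-Complex.I * deriv u x) - (Complex.ofReal (deriv ω x)) * u x)
          2 volume := by
  refine (stmt_19_general (hu.differentiable one_ne_zero)
    (hu.continuous.memLp_of_hasCompactSupport husupp) (measurable_deriv ω).aemeasurable hℏ).trans ?_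
  gcongr ENNReal.ofReal (?_ / ℏ) * _ * _
  exact one_le_two
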